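/- arXiv:1202.2891 — 4 statements merged into one kernel-verified Lean document; each statement's English description precedes it below -/
import Mathlib

section
/- Let M be a free ℤ-module of finite rank g, let φ : M → M be a ℤ-linear automorphism, and let χ ∈ M be such that the ℤ-span of the orbit {φ^n χ : n ∈ ℤ} is all of M. Then the g elements χ, φχ, φ²χ, …, φ^{g−1}χ form a ℤ-basis of M. -/
/-- Cayley-Hamilton: a submodule containing the first `rank` iterates contains them all. -/
theorem pow_mem_of_charpoly {R M : Type*} [CommRing R] [Nontrivial R] [AddCommGroup M]
    [Module R M] [Module.Free R M] [Module.Finite R M] (f : Module.End R M) (χ : M)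
    (N : Submodule R M) (hN : ∀ i < Module.finrank R M, (f ^ i) χ ∈ N) (n : ℕ) :
    (f ^ n) χ ∈ N := by
  rw [LinearMap.pow_eq_aeval_mod_charpoly f n]
  have hdeg : ((Polynomial.X ^ n : Polynomial R) %ₘ f.charpoly).degree
      < (Module.finrank R M : ℕ) := by
    have h := Polynomial.degree_modByMonic_lt (Polynomial.X ^ n : Polynomial R)
      (LinearMap.charpoly_monic f)
    rwa [Polynomial.degree_eq_natDegree (LinearMap.charpoly_monic f).ne_zero,
      LinearMap.charpoly_natDegree] at h
  rw [Polynomial.aeval_def, Polynomial.eval₂_eq_sum, Polynomial.sum_def,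
    LinearMap.sum_apply]
  refine Submodule.sum_mem _ fun i hi => ?_
  have hlt : i < Module.finrank R M := by
    have h1 := Polynomial.le_degree_of_mem_supp i hi
    exact_mod_cast lt_of_le_of_lt h1 hdeg
  rw [Module.End.mul_apply, Module.algebraMap_end_apply]
  exact N.smul_mem _ (hN i hlt)

/-- If `M` is a free `ℤ`-module of finite rank `g`, `φ : M ≃ₗ[ℤ] M` is a `ℤ`-linear
automorphism, and `χ ∈ M` is such that the `ℤ`-span of the orbit `{φ^n χ : n ∈ ℤ}` is all
of `M`, then `χ, φ χ, …, φ^(g-1) χ` form a `ℤ`-basis of `M`. -/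
theorem orbit_generator_gives_basis
    (M : Type*) [AddCommGroup M] [Module ℤ M] [Module.Free ℤ M] [Module.Finite ℤ M]
    (φ : M ≃ₗ[ℤ] M) (χ : M)
    (hχ : Submodule.span ℤ (Set.range fun n : ℤ => (φ ^ n) χ) = ⊤) :
    LinearIndependent ℤ (fun j : Fin (Module.finrank ℤ M) => (φ ^ (j : ℕ)) χ) ∧
      Submodule.span ℤ
        (Set.range fun j : Fin (Module.finrank ℤ M) => (φ ^ (j : ℕ)) χ) = ⊤ := by
  set N := Submodule.span ℤ
    (Set.range fun j : Fin (Module.finrank ℤ M) => (φ ^ (j : ℕ)) χ) with hN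
  let f : Module.End ℤ M := φ.toLinearMap
  have hf : ∀ (n : ℕ) (x : M), (f ^ n) x = (φ ^ n) x := by
    intro n
    induction n with
    | zero => intro x; simp
    | succ n ih =>
      intro x
      rw [pow_succ, pow_succ, Module.End.mul_apply, LinearEquiv.mul_apply, ih]
      rfl
  -- all nonnegative powers lie in `N`, by Cayley-Hamilton
  have hpow : ∀ n : ℕ, (φ ^ n) χ ∈ N := by
    intro n
    rw [← hf]
    exact pow_mem_of_charpoly f χ N
      (fun i hi => by rw [hf]; exact Submodule.subset_span ⟨⟨i, hi⟩, rfl⟩) n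
  have hstab : ∀ x ∈ N, f x ∈ N := by
    intro x hx
    have : N ≤ N.comap f := by
      conv_lhs => rw [hN]
      rw [Submodule.span_le]
      rintro _ ⟨j, rfl⟩
      have h := hpow (j + 1)
      rw [pow_succ'] at h
      exact h
    exact this hx
  -- the ascending chain `φ⁻ᵏ N` stabilizes
  have hmono : Monotone fun k : ℕ => N.comap (f ^ k) := by
    refine monotone_nat_of_le_succ fun k x hx => ?_
    change (f ^ (k + 1)) x ∈ N
    rw [pow_succ']
    exact hstab _ hx
  obtain ⟨k, hk⟩ := monotone_stabilizes_iff_noetherian.mpr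
    (inferInstance : IsNoetherian ℤ M) ⟨_, hmono⟩
  have hle : ∀ m, N.comap (f ^ m) ≤ N.comap (f ^ k) := by
    intro m
    rcases le_total m k with h | h
    · exact hmono h
    · exact (hk m h).ge
  have htop : (⊤ : Submodule ℤ M) ≤ N.comap (f ^ k) := by
    rw [← hχ, Submodule.span_le]
    rintro _ ⟨n, rfl⟩
    apply hle n.natAbs
    change (f ^ n.natAbs) ((φ ^ n) χ) ∈ N
    rw [hf, ← zpow_natCast, ← LinearEquiv.mul_apply, ← zpow_add]
    obtain ⟨m, hm⟩ := Int.eq_ofNat_of_zero_le (a := (n.natAbs : ℤ) + n) (by omega)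
    rw [hm, zpow_natCast]
    exact hpow m
  have hNtop : N = ⊤ := by
    rw [eq_top_iff]
    intro y _
    have h : (f ^ k) ((φ ^ k).symm y) ∈ N := htop Submodule.mem_top
    rwa [hf, LinearEquiv.apply_symm_apply] at h
  exact ⟨linearIndependent_of_top_le_span_of_card_eq_finrank hNtop.ge (by simp), hNtop⟩
end

section
/- Let k be a finite field with q elements and K an algebraic closure of k. Let M be a free ℤ-module of finite rank g, φ : M → M a ℤ-linear automorphism, and suppose (M, φ) is principal with generator χ. Let f ∈ ℤ[x] be the characteristic polynomial of φ. Then the evaluation map e ↦ e(χ) is a group isomorphism from the group G(M, φ) of q-Frobenius characters of (M, φ) onto the group {ω ∈ Kˣ : ω^{f(q)} = 1} of f(q)-th roots of unity in K, where f(q) denotes f evaluated at q. -/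
/-- The group of `q`-Frobenius characters of `(M, φ)`: group homomorphisms `e` from the
additive group `M` to the multiplicative group `Kˣ` satisfying `e (φ m) = e m ^ q`,
as a subgroup of the group `M → Kˣ` under pointwise multiplication. -/
def frobeniusCharGroup {M : Type*} [AddCommGroup M] [Module ℤ M]
    (K : Type*) [Field K] (q : ℕ) (φ : M ≃ₗ[ℤ] M) : Subgroup (M → Kˣ) where
  carrier := {e | (∀ a b, e (a + b) = e a * e b) ∧ ∀ m, e (φ m) = e m ^ q}
  mul_mem' := by
    rintro a b ⟨ha1, ha2⟩ ⟨hb1, hb2⟩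
    refine ⟨fun x y => ?_, fun m => ?_⟩
    · simp only [Pi.mul_apply, ha1 x y, hb1 x y]
      exact mul_mul_mul_comm _ _ _ _
    · simp only [Pi.mul_apply, ha2 m, hb2 m, mul_pow]
  one_mem' := ⟨fun _ _ => (one_mul 1).symm, fun _ => (one_pow q).symm⟩
  inv_mem' := by
    rintro a ⟨ha1, ha2⟩
    refine ⟨fun x y => ?_, fun m => ?_⟩
    · simp only [Pi.inv_apply, ha1 x y, mul_inv]
    · simp only [Pi.inv_apply, ha2 m, inv_pow]

/-- The group `{ω ∈ Kˣ : ω ^ n = 1}` of `n`-th roots of unity in `K`, for `n : ℤ`. -/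
def zpowOneSubgroup (K : Type*) [Field K] (n : ℤ) : Subgroup Kˣ where
  carrier := {ω | ω ^ n = 1}
  mul_mem' := by
    intro a b ha hb
    simp only [Set.mem_setOf_eq] at *
    rw [mul_zpow, ha, hb, one_mul]
  one_mem' := one_zpow n
  inv_mem' := by
    intro a ha
    simp only [Set.mem_setOf_eq] at *
    rw [inv_zpow, ha, inv_one]

open Polynomial in
/-- Evaluation of polynomials at an endomorphism, as a ring homomorphism. -/
noncomputable def fcA {R M : Type*} [CommRing R] [AddCommGroup M] [Module R M]
    (φ : M →ₗ[R] M) : R[X] →+* Module.End R M := (aeval (R := R) φ).toRingHom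

open Polynomial in
theorem fcA_X {R M : Type*} [CommRing R] [AddCommGroup M] [Module R M]
    (φ : M →ₗ[R] M) : fcA φ X = φ := aeval_X (R := R) φ

open Polynomial in
theorem fcA_C {R M : Type*} [CommRing R] [AddCommGroup M] [Module R M]
    (φ : M →ₗ[R] M) (a : R) (m : M) : fcA φ (C a) m = a • m := by
  change aeval φ (C a) m = a • m
  rw [aeval_C, Module.algebraMap_end_apply]

theorem fcA_charpoly {R M : Type*} [CommRing R] [AddCommGroup M] [Module R M]
    [Module.Free R M] [Module.Finite R M]
    (φ : M →ₗ[R] M) : fcA φ φ.charpoly = 0 := LinearMap.aeval_self_charpoly φ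

open Polynomial in
theorem fc_eval {M : Type*} [AddCommGroup M] [Module ℤ M] {K : Type*} [Field K] (q : ℕ)
    (φ : M ≃ₗ[ℤ] M) (e : M → Kˣ) (he : e ∈ frobeniusCharGroup K q φ) (p : ℤ[X]) (m : M) :
    e (fcA φ.toLinearMap p m) = e m ^ (p.eval (q : ℤ)) := by
  obtain ⟨h1, h2⟩ := he
  let E : M →+ Additive Kˣ := AddMonoidHom.mk' (fun m => Additive.ofMul (e m)) h1
  have hz : ∀ (a : ℤ) m, e (a • m) = e m ^ a := fun a m => by
    have := map_zsmul E a m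
    exact this
  have hp : ∀ (n : ℕ) m, e ((φ.toLinearMap ^ n) m) = e m ^ (q ^ n) := by
    intro n
    induction n with
    | zero => intro m; simp
    | succ n ih =>
      intro m
      rw [pow_succ', Module.End.mul_apply]
      have := h2 ((φ.toLinearMap ^ n) m)
      rw [ih, ← pow_mul, ← pow_succ] at this
      exact this
  induction p using Polynomial.induction_on' with
  | add a b ha hb => rw [map_add, LinearMap.add_apply, h1, ha, hb, eval_add, zpow_add]
  | monomial n a =>
    rw [← C_mul_X_pow_eq_monomial, map_mul, map_pow, fcA_X, Module.End.mul_apply, fcA_C]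
    refine (congrArg e (int_smul_eq_zsmul (inferInstance : Module ℤ M) a _)).trans ?_
    rw [hz, hp,
      eval_mul, eval_C, eval_pow, eval_X, mul_comm, zpow_mul]
    norm_cast

open Polynomial in
theorem fc_surj {R M : Type*} [CommRing R] [Nontrivial R] [AddCommGroup M] [Module R M] [Module.Free R M] [Module.Finite R M]
    (φ : M ≃ₗ[R] M) (χ : M)
    (hχ : Submodule.span R (Set.range fun n : ℤ => (φ ^ n) χ) = ⊤) (m : M) :
    ∃ p : R[X], fcA φ.toLinearMap p χ = m := by
  let T : R[X] →ₗ[R] M :=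
    { toFun := fun p => fcA φ.toLinearMap p χ
      map_add' := fun a b => by rw [map_add, LinearMap.add_apply]
      map_smul' := fun a b => by
        rw [smul_eq_C_mul, map_mul, Module.End.mul_apply, fcA_C, RingHom.id_apply] }
  have hT : ∀ p, T p = fcA φ.toLinearMap p χ := fun p => rfl
  -- the inverse of φ is a polynomial in φ
  obtain ⟨g, hg⟩ : ∃ g : R[X], ∀ m, fcA φ.toLinearMap g m = φ.symm m := by
    set f := LinearMap.charpoly φ.toLinearMap with hf
    have hu : IsUnit (f.coeff 0) := by
      have h := LinearMap.det_eq_sign_charpoly_coeff φ.toLinearMap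
      have h2 := φ.isUnit_det'
      rw [h] at h2
      exact isUnit_of_mul_isUnit_right h2
    obtain ⟨c, hc⟩ := hu
    refine ⟨-(C (↑c⁻¹ : R) * f.divX), fun m => ?_⟩
    have h0 := LinearMap.congr_fun (fcA_charpoly φ.toLinearMap) (φ.symm m)
    rw [← hf, ← divX_mul_X_add f, ← hc] at h0
    simp only [map_add, map_mul, fcA_X, fcA_C, LinearMap.add_apply, Module.End.mul_apply,
      LinearMap.zero_apply, LinearEquiv.coe_coe,
      LinearEquiv.apply_symm_apply] at h0
    simp only [map_neg, map_mul, fcA_C, LinearMap.neg_apply, Module.End.mul_apply]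
    rw [eq_neg_of_add_eq_zero_left h0, smul_neg, neg_neg, smul_smul, Units.inv_mul, one_smul]
  have key : Submodule.span R (Set.range fun n : ℤ => (φ ^ n) χ) ≤ LinearMap.range T := by
    rw [Submodule.span_le]
    rintro _ ⟨n, rfl⟩
    induction n using Int.induction_on with
    | zero => exact ⟨1, by simp [hT]⟩
    | succ n ih =>
      obtain ⟨p, hp⟩ := ih
      refine ⟨X * p, ?_⟩
      rw [hT] at *
      simp only at hp ⊢
      rw [add_comm, zpow_add, zpow_one, map_mul, Module.End.mul_apply, hp, fcA_X]
      rfl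
    | pred n ih =>
      obtain ⟨p, hp⟩ := ih
      refine ⟨g * p, ?_⟩
      rw [hT] at *
      simp only at hp ⊢
      rw [sub_eq_add_neg, add_comm, zpow_add, zpow_neg_one, map_mul, Module.End.mul_apply, hp, hg]
      rfl
  rw [hχ] at key
  exact key (Submodule.mem_top : m ∈ ⊤)

open Polynomial in
theorem fc_ker {R M : Type*} [CommRing R] [Nontrivial R] [AddCommGroup M] [Module R M] [Module.Free R M] [Module.Finite R M]
    (φ : M ≃ₗ[R] M) (χ : M)
    (hχ : Submodule.span R (Set.range fun n : ℤ => (φ ^ n) χ) = ⊤) (p : R[X])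
    (hp : fcA φ.toLinearMap p χ = 0) : LinearMap.charpoly φ.toLinearMap ∣ p := by
  set f := LinearMap.charpoly φ.toLinearMap with hf
  have hm : f.Monic := LinearMap.charpoly_monic _
  have hmod : ∀ p : R[X], fcA φ.toLinearMap (p %ₘ f) = fcA φ.toLinearMap p := fun p => by
    conv_rhs => rw [← modByMonic_add_div p f]
    rw [map_add, map_mul, hf, fcA_charpoly, zero_mul, add_zero]
  let T : R[X] →ₗ[R] M :=
    { toFun := fun p => fcA φ.toLinearMap p χ
      map_add' := fun a b => by rw [map_add, LinearMap.add_apply]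
      map_smul' := fun a b => by
        rw [smul_eq_C_mul, map_mul, Module.End.mul_apply, fcA_C, RingHom.id_apply] }
  let S : degreeLT R f.natDegree →ₗ[R] M := T ∘ₗ (degreeLT R f.natDegree).subtype
  have hmem : ∀ p : R[X], p %ₘ f ∈ degreeLT R f.natDegree := fun p => by
    rw [mem_degreeLT, ← degree_eq_natDegree hm.ne_zero]
    exact degree_modByMonic_lt _ hm
  have hS : Function.Surjective S := fun m => by
    obtain ⟨p, hp⟩ := fc_surj φ χ hχ m
    refine ⟨⟨p %ₘ f, hmem p⟩, ?_⟩
    change fcA φ.toLinearMap (p %ₘ f) χ = m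
    rw [hmod, hp]
  have hd : Module.finrank R M = f.natDegree := (LinearMap.charpoly_natDegree _).symm
  let i : degreeLT R f.natDegree ≃ₗ[R] M :=
    (degreeLTEquiv R f.natDegree).trans (Module.finBasisOfFinrankEq R M hd).equivFun.symm
  have hinj : Function.Injective S :=
    OrzechProperty.injective_of_surjective_of_injective i.toLinearMap S i.injective hS
  have h0 : S ⟨p %ₘ f, hmem p⟩ = S 0 := by
    rw [map_zero]
    change fcA φ.toLinearMap (p %ₘ f) χ = 0
    rw [hmod, hp]
  have := congrArg Subtype.val (hinj h0)
  exact (modByMonic_eq_zero_iff_dvd hm).1 this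

theorem frobeniusCharGroup_equiv_rootsOfUnity
    (k : Type*) [Field k] [Fintype k] (K : Type*) [Field K] [Algebra k K] [IsAlgClosure k K]
    (q : ℕ) (hq : Fintype.card k = q)
    (M : Type*) [AddCommGroup M] [Module ℤ M] [Module.Free ℤ M] [Module.Finite ℤ M]
    (φ : M ≃ₗ[ℤ] M) (χ : M)
    (hχ : Submodule.span ℤ (Set.range fun n : ℤ => (φ ^ n) χ) = ⊤)
    (f : Polynomial ℤ) (hf : f = LinearMap.charpoly φ.toLinearMap) :
    ∃ ψ : frobeniusCharGroup K q φ ≃* zpowOneSubgroup K (f.eval (q : ℤ)),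
      ∀ e : frobeniusCharGroup K q φ, (ψ e : Kˣ) = (e : M → Kˣ) χ := by
  have hzero : ∀ e ∈ frobeniusCharGroup K q φ, e 0 = 1 := fun e he => by
    have := he.1 0 0
    rw [add_zero] at this
    exact left_eq_mul.1 this
  let Ψ : frobeniusCharGroup K q φ →* zpowOneSubgroup K (f.eval (q : ℤ)) :=
    { toFun := fun e => ⟨(e : M → Kˣ) χ, by
        change (e : M → Kˣ) χ ^ (f.eval (q : ℤ)) = 1
        rw [← fc_eval q φ (e : M → Kˣ) e.2, hf, fcA_charpoly]
        exact hzero e e.2⟩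
      map_one' := rfl
      map_mul' := fun _ _ => rfl }
  have hbij : Function.Bijective Ψ := by
    constructor
    · intro a b hab
      have hab' : (a : M → Kˣ) χ = (b : M → Kˣ) χ := congrArg Subtype.val hab
      ext1
      funext m
      obtain ⟨p, rfl⟩ := fc_surj φ χ hχ m
      rw [fc_eval q φ (a : M → Kˣ) a.2, fc_eval q φ (b : M → Kˣ) b.2, hab']
    · rintro ⟨ω, hω⟩
      change ω ^ (f.eval (q : ℤ)) = 1 at hω
      choose P hP using fc_surj φ χ hχ
      have key : ∀ a b : Polynomial ℤ, fcA φ.toLinearMap a χ =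
          fcA φ.toLinearMap b χ → ω ^ (a.eval (q : ℤ)) = ω ^ (b.eval (q : ℤ)) := by
        intro a b hab
        obtain ⟨c, hc⟩ := fc_ker φ χ hχ (a - b) (by rw [map_sub, LinearMap.sub_apply, hab, sub_self])
        rw [← hf] at hc
        rw [eq_add_of_sub_eq hc, Polynomial.eval_add, Polynomial.eval_mul, zpow_add, zpow_mul, hω,
          one_zpow, one_mul]
      refine ⟨⟨fun m => ω ^ ((P m).eval (q : ℤ)), fun a b => ?_, fun m => ?_⟩, ?_⟩
      · rw [← zpow_add, ← Polynomial.eval_add]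
        apply key
        rw [map_add, LinearMap.add_apply, hP, hP, hP]
      · rw [← zpow_natCast, ← zpow_mul]
        have : (P m).eval (q : ℤ) * (q : ℤ) = (Polynomial.X * P m).eval (q : ℤ) := by
          rw [Polynomial.eval_mul, Polynomial.eval_X, mul_comm]
        rw [this]
        apply key
        rw [map_mul, Module.End.mul_apply, hP, hP, fcA_X]
        rfl
      · apply Subtype.ext
        change ω ^ ((P χ).eval (q : ℤ)) = ω
        rw [key (P χ) 1 (by rw [hP, map_one]; rfl), Polynomial.eval_one, zpow_one]
  exact ⟨MulEquiv.ofBijective Ψ hbij, fun _ => rfl⟩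
end

section
/- Let A : ℤ³ → ℤ³ be the ℤ-linear map given by the symmetric matrix with rows (−4, 2, 2), (2, −4, 2), (2, 2, −4). Let S = {(a, b, c) ∈ ℤ³ : a + b + c = 0}. Then the image of A is contained in S, and the quotient group S / A(ℤ³) is isomorphic to ℤ/6ℤ × ℤ/2ℤ. -/
/-- The submodule `S = {(a, b, c) ∈ ℤ³ : a + b + c = 0}`. -/
def sumZeroSubmodule3 : Submodule ℤ (Fin 3 → ℤ) where
  carrier := {v | v 0 + v 1 + v 2 = 0}
  add_mem' := by
    intro a b ha hb
    simp only [Set.mem_setOf_eq, Pi.add_apply] at *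
    omega
  zero_mem' := by simp
  smul_mem' := by
    intro c v hv
    simp only [Set.mem_setOf_eq, Pi.smul_apply, smul_eq_mul] at *
    rw [← mul_add, ← mul_add, hv, mul_zero]

/-- Let `A : ℤ³ → ℤ³` be the linear map with matrix
`[[−4, 2, 2], [2, −4, 2], [2, 2, −4]]` and let `S = {(a, b, c) ∈ ℤ³ : a + b + c = 0}`.
Then the image of `A` is contained in `S`, and the quotient `S / A(ℤ³)` is isomorphic to
`ℤ/6ℤ × ℤ/2ℤ`. -/
theorem quotient_by_genus4_intersection_matrix :
    LinearMap.range
        (Matrix.toLin' !![(-4 : ℤ), 2, 2; 2, -4, 2; 2, 2, -4]) ≤ sumZeroSubmodule3 ∧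
      Nonempty ((sumZeroSubmodule3 ⧸
        (LinearMap.range
          (Matrix.toLin' !![(-4 : ℤ), 2, 2; 2, -4, 2; 2, 2, -4])).comap
            sumZeroSubmodule3.subtype) ≃+ ZMod 6 × ZMod 2) := by
  constructor
  · rintro _ ⟨v, rfl⟩
    change _ + _ + _ = (0 : ℤ)
    simp [Matrix.toLin'_apply, Matrix.mulVec, dotProduct, Fin.sum_univ_three]
    ring
  · let f : sumZeroSubmodule3 →ₗ[ℤ] ZMod 6 × ZMod 2 :=
      AddMonoidHom.toIntLinearMap
        { toFun := fun s => (((s.1 0 - s.1 1 : ℤ) : ZMod 6), ((s.1 1 : ℤ) : ZMod 2))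
          map_zero' := by simp
          map_add' := by
            intro s t
            ext <;> simp
            ring }
    have hf : ∀ s, f s = (((s.1 0 - s.1 1 : ℤ) : ZMod 6), ((s.1 1 : ℤ) : ZMod 2)) :=
      fun s => rfl
    have hsurj : Function.Surjective f := by
      rintro ⟨x, y⟩
      obtain ⟨a, rfl⟩ := ZMod.intCast_surjective x
      obtain ⟨b, rfl⟩ := ZMod.intCast_surjective y
      refine ⟨⟨![a + b, b, -a - 2 * b], ?_⟩, ?_⟩
      · change (a + b) + b + (-a - 2 * b) = 0
        ring
      · rw [hf]
        simp
    have hker : LinearMap.ker f = (LinearMap.range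
          (Matrix.toLin' !![(-4 : ℤ), 2, 2; 2, -4, 2; 2, 2, -4])).comap
            sumZeroSubmodule3.subtype := by
      ext ⟨v, hv⟩
      have hv' : v 0 + v 1 + v 2 = 0 := hv
      rw [LinearMap.mem_ker, hf, Prod.mk_eq_zero, ZMod.intCast_zmod_eq_zero_iff_dvd,
        ZMod.intCast_zmod_eq_zero_iff_dvd, Submodule.mem_comap, LinearMap.mem_range]
      constructor
      · rintro ⟨⟨k, hk⟩, ⟨y, hy⟩⟩
        push_cast at hk hy
        refine ⟨![-y - 2 * k, -y - k, 0], ?_⟩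
        ext i
        fin_cases i <;>
          simp [Matrix.toLin'_apply, Matrix.mulVec, dotProduct, Fin.sum_univ_three] <;>
          omega
      · rintro ⟨w, hw⟩
        have h0 := congrFun hw 0
        have h1 := congrFun hw 1
        simp [Matrix.toLin'_apply, Matrix.mulVec, dotProduct, Fin.sum_univ_three] at h0 h1
        dsimp only
        push_cast
        constructor <;> omega
    exact ⟨((Submodule.quotEquivOfEq _ _ hker.symm).trans
      (f.quotKerEquivOfSurjective hsurj)).toAddEquiv⟩
end

section
/- Let K be an algebraically closed field of characteristic different from 2, and let i ∈ K satisfy i² = −1. Then the set of nonzero quadruples (x, y, z, w) ∈ K⁴ satisfying xy = zw, (x − y)(z − w)(z + w) = 0, and x + y = 0 is exactly the set of nonzero scalar multiples of the six points (0,0,1,0), (0,0,0,1), (i,−i,1,1), (−i,i,1,1), (−1,1,−1,1), (1,−1,−1,1). -/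
/-- Let `K` be an algebraically closed field of characteristic `≠ 2` and `i ∈ K` a square
root of `−1`.  The nonzero solutions `(x, y, z, w) ∈ K⁴` of `xy = zw`,
`(x − y)(z − w)(z + w) = 0`, `x + y = 0` are exactly the nonzero scalar multiples of the
six points `(0,0,1,0)`, `(0,0,0,1)`, `(i,−i,1,1)`, `(−i,i,1,1)`, `(−1,1,−1,1)`,
`(1,−1,−1,1)`. -/
theorem hyperplane_section_XplusY_of_special_fiber
    (K : Type*) [Field K] [IsAlgClosed K] (hchar : ringChar K ≠ 2)
    (i : K) (hi : i ^ 2 = -1) :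
    ∀ v : Fin 4 → K, v ≠ 0 →
      ((v 0 * v 1 = v 2 * v 3 ∧ (v 0 - v 1) * (v 2 - v 3) * (v 2 + v 3) = 0 ∧
          v 0 + v 1 = 0) ↔
        ∃ c : K, c ≠ 0 ∧
          (v = c • ![0, 0, 1, 0] ∨ v = c • ![0, 0, 0, 1] ∨
            v = c • ![i, -i, 1, 1] ∨ v = c • ![-i, i, 1, 1] ∨
            v = c • ![-1, 1, -1, 1] ∨ v = c • ![1, -1, -1, 1])) := by
  have h2 : (2 : K) ≠ 0 := Ring.two_ne_zero hchar
  have key : ∀ (v : Fin 4 → K) (c a b d e : K), v = c • ![a, b, d, e] ↔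
      v 0 = c * a ∧ v 1 = c * b ∧ v 2 = c * d ∧ v 3 = c * e := by
    intro v c a b d e
    rw [funext_iff, Fin.forall_fin_succ, Fin.forall_fin_succ, Fin.forall_fin_succ,
      Fin.forall_fin_succ]
    simp
  intro v hv
  have hv' : ¬ (v 0 = 0 ∧ v 1 = 0 ∧ v 2 = 0 ∧ v 3 = 0) := by
    rintro ⟨a, b, d, e⟩
    apply hv
    funext j
    fin_cases j <;> assumption
  simp only [key]
  generalize v 0 = x at *
  generalize v 1 = y at *
  generalize v 2 = z at *
  generalize v 3 = w at *
  constructor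
  · rintro ⟨h, h', hs⟩
    obtain rfl : y = -x := by linear_combination hs
    have h3 : x * ((z - w) * (z + w)) = 0 := by
      apply mul_left_cancel₀ h2
      linear_combination h'
    rcases mul_eq_zero.1 h3 with rfl | h3
    · have : z * w = 0 := by linear_combination -h
      rcases mul_eq_zero.1 this with rfl | rfl
      · exact ⟨w, by rintro rfl; simp at hv', by simp⟩
      · exact ⟨z, by rintro rfl; simp at hv', by simp⟩
    · rcases mul_eq_zero.1 h3 with h3 | h3
      · obtain rfl : z = w := by linear_combination h3
        have h4 : (x - z * i) * (x + z * i) = 0 := by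
          linear_combination -h - z ^ 2 * hi
        refine ⟨z, ?_, ?_⟩
        · rintro rfl
          apply hv'
          simpa using h4
        · rcases mul_eq_zero.1 h4 with h4 | h4
          · right; right; left
            refine ⟨?_, ?_, ?_, ?_⟩ <;> grind
          · right; right; right; left
            refine ⟨?_, ?_, ?_, ?_⟩ <;> grind
      · obtain rfl : z = -w := by linear_combination h3
        have h4 : (x + w) * (x - w) = 0 := by
          linear_combination -h
        refine ⟨w, ?_, ?_⟩
        · rintro rfl
          apply hv'
          simpa using h4
        · rcases mul_eq_zero.1 h4 with h4 | h4
          · right; right; right; right; left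
            refine ⟨?_, ?_, ?_, ?_⟩ <;> grind
          · right; right; right; right; right
            refine ⟨?_, ?_, ?_, ?_⟩ <;> grind
  · rintro ⟨c, -, h⟩
    rcases h with h | h | h | h | h | h <;> obtain ⟨rfl, rfl, rfl, rfl⟩ := h <;>
      refine ⟨?_, ?_, ?_⟩ <;> grind
end
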